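/- arXiv:1812.04781 — 2 statements merged into one kernel-verified Lean document; each statement's English description precedes it below -/
import Mathlib

section
/- For every m ≥ 1 and every n ≥ 1 there exist mn homogeneous polynomials f_1, f_2, …, f_{mn} in the invariant ring 𝔽_q[mW]^{SL_n(𝔽_q)} such that the invariant field 𝔽_q(mW)^{SL_n(𝔽_q)} is generated by them: 𝔽_q(mW)^{SL_n(𝔽_q)} = 𝔽_q(f_1, f_2, …, f_{mn}). -/
open MvPolynomial Matrix

set_option maxHeartbeats 1000000
set_option synthInstance.maxHeartbeats 400000

noncomputable section

/-- The polynomial ring `𝔽_q[mW]` in the variables `x_{ij}`, `1 ≤ i ≤ m`, `1 ≤ j ≤ n`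
(indexed here by `(i, j) : Fin m × Fin n`). -/
abbrev PolyMW (F : Type) [Field F] (m n : ℕ) : Type := MvPolynomial (Fin m × Fin n) F

/-- The rational function field `𝔽_q(mW)`. -/
abbrev RatMW (F : Type) [Field F] (m n : ℕ) : Type := FractionRing (PolyMW F m n)

/-- The substitution endomorphism of `𝔽_q[mW]` induced by a matrix `σ`: it transforms each
column vector `X_i = ᵗ(x_{i1},…,x_{in})` by the standard action, `X_i ↦ σ • X_i`. -/
def matSub {F : Type} [Field F] {m n : ℕ} (σ : Matrix (Fin n) (Fin n) F) :
    PolyMW F m n →ₐ[F] PolyMW F m n :=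
  aeval fun v => ∑ l, C (σ v.2 l) * X (v.1, l)

lemma matSub_comp {F : Type} [Field F] {m n : ℕ} (A B : Matrix (Fin n) (Fin n) F) :
    (matSub (F := F) (m := m) (n := n) A).comp (matSub B) = matSub (B * A) := by
  apply MvPolynomial.algHom_ext
  rintro ⟨i, j⟩
  simp only [AlgHom.coe_comp, Function.comp_apply, matSub, aeval_X, map_sum, _root_.map_mul,
    aeval_C, MvPolynomial.algebraMap_eq, Finset.mul_sum]
  rw [Finset.sum_comm]
  refine Finset.sum_congr rfl fun s _ => ?_
  calc ∑ l, C (B j l) * (C (A l s) * X (i, s))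
      = (∑ l, C (B j l * A l s)) * X (i, s) := by
        rw [Finset.sum_mul]
        simp [C_mul, mul_assoc]
    _ = C ((B * A) j s) * X (i, s) := by
        rw [Matrix.mul_apply, map_sum]

lemma matSub_one {F : Type} [Field F] {m n : ℕ} :
    matSub (F := F) (m := m) (n := n) (1 : Matrix (Fin n) (Fin n) F) = AlgHom.id F _ := by
  apply MvPolynomial.algHom_ext
  rintro ⟨i, j⟩
  simp [matSub, Matrix.one_apply, ite_mul, apply_ite (C (σ := Fin m × Fin n) (R := F))]

/-- The algebra automorphism of `𝔽_q[mW]` induced by `σ ∈ GL_n(𝔽_q)`. -/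
def matAut {F : Type} [Field F] {m n : ℕ} (σ : GL (Fin n) F) :
    PolyMW F m n ≃ₐ[F] PolyMW F m n :=
  AlgEquiv.ofAlgHom (matSub (σ : Matrix (Fin n) (Fin n) F))
    (matSub ((↑(σ⁻¹) : Matrix (Fin n) (Fin n) F)))
    (by rw [matSub_comp, σ.inv_mul, matSub_one])
    (by rw [matSub_comp, σ.mul_inv, matSub_one])

/-- The automorphism of `𝔽_q(mW)` induced by the action of `σ ∈ GL_n(𝔽_q)` on `𝔽_q[mW]`. -/
def fracAct {F : Type} [Field F] {m n : ℕ} (σ : GL (Fin n) F) :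
    RatMW F m n →+* RatMW F m n :=
  (IsFractionRing.ringEquivOfRingEquiv
    ((matAut (F := F) (m := m) (n := n) σ).toRingEquiv) :
    RatMW F m n ≃+* RatMW F m n).toRingHom

/-- The fixed subfield `𝔽_q(mW)^G` of a subgroup `G ≤ GL_n(𝔽_q)`. -/
def fixedSubfield (F : Type) [Field F] (m n : ℕ) (G : Subgroup (GL (Fin n) F)) :
    Subfield (RatMW F m n) where
  carrier := {a : RatMW F m n | ∀ σ ∈ G, fracAct σ a = a}
  mul_mem' := fun ha hb σ hσ => by
    rw [(fracAct σ).map_mul, ha σ hσ, hb σ hσ]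
  one_mem' := fun σ hσ => (fracAct σ).map_one
  add_mem' := fun ha hb σ hσ => by
    rw [(fracAct σ).map_add, ha σ hσ, hb σ hσ]
  zero_mem' := fun σ hσ => (fracAct σ).map_zero
  neg_mem' := fun ha σ hσ => by rw [(fracAct σ).map_neg, ha σ hσ]
  inv_mem' := fun a ha σ hσ => by rw [map_inv₀ (fracAct σ), ha σ hσ]

/-- `SL_n(𝔽_q)` as the subgroup of `GL_n(𝔽_q)` of matrices of determinant `1`. -/
def SLsub (F : Type) [Field F] (n : ℕ) : Subgroup (GL (Fin n) F) :=
  MonoidHom.ker (Units.map (Matrix.detMonoidHom (n := Fin n) (R := F)))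

/-!
Write `x` for one of the vectors `X_i` and `E` for the field generated by the polynomials
`slGenerator`. Expanding the Moore determinant of `(Y, x_1, …, x_n)` along its first row gives a
linearized polynomial in `Y` whose coefficients are, up to sign, the maximal minors of the
`n × (n + 1)` Moore matrix of `x`, hence lie in `E`. It has degree `q ^ n` and vanishes on the
`q ^ n` elements of the `𝔽_q`-span of `x`, so these are all of its roots. By Cramer's rule every
other `X_i` is rational over `E(x)`, so `𝔽_q(mW) = E(x)` is the splitting field of this separable
polynomial and is Galois over `E`. A Galois automorphism permutes the roots, so it acts on `x` by a
matrix over `𝔽_q`; since it fixes the Moore determinant of `x`, which that matrix multiplies by its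
determinant, the matrix lies in `SL_n(𝔽_q)`.
-/

open scoped Polynomial

section LinearizedPolynomial

variable (F : Type*) [Fintype F]

/-- The linearized polynomial (or `q`-polynomial) `∑ k, c k * X ^ q ^ k`, where `q = #F`; its values
depend `F`-linearly on the point of evaluation. -/
def linearizedPolynomial {R : Type*} [Semiring R] {n : ℕ} (c : Fin n → R) : R[X] :=
  ∑ k : Fin n, Polynomial.monomial (Fintype.card F ^ (k : ℕ)) (c k)

lemma aeval_linearizedPolynomial {R S : Type*} [CommSemiring R] [Semiring S] [Algebra R S] {n : ℕ}
    (c : Fin n → R) (y : S) :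
    Polynomial.aeval y (linearizedPolynomial F c) =
      ∑ k : Fin n, algebraMap R S (c k) * y ^ Fintype.card F ^ (k : ℕ) := by
  simp [linearizedPolynomial, Polynomial.aeval_monomial]

variable [Field F]

lemma coeff_linearizedPolynomial {R : Type*} [Semiring R] {n : ℕ} (c : Fin n → R) (k : Fin n) :
    (linearizedPolynomial F c).coeff (Fintype.card F ^ (k : ℕ)) = c k := by
  have card_pow_inj (l : Fin n) :
      Fintype.card F ^ (l : ℕ) = Fintype.card F ^ (k : ℕ) ↔ l = k := by
    rw [Nat.pow_right_inj Fintype.one_lt_card, Fin.val_inj]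
  simp [linearizedPolynomial, Polynomial.coeff_monomial, card_pow_inj]

variable {F} in
lemma linearizedPolynomial_ne_zero {R : Type*} [Semiring R] {n : ℕ} {c : Fin n → R} {k : Fin n}
    (hk : c k ≠ 0) : linearizedPolynomial F c ≠ 0 := fun h => hk <| by
  rw [← coeff_linearizedPolynomial F c, h, Polynomial.coeff_zero]

lemma natDegree_linearizedPolynomial_le {R : Type*} [Semiring R] {n : ℕ} (c : Fin (n + 1) → R) :
    (linearizedPolynomial F c).natDegree ≤ Fintype.card F ^ n :=
  Polynomial.natDegree_sum_le_of_forall_le _ _ fun k _ =>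
    (Polynomial.natDegree_monomial_le _).trans
      (Nat.pow_le_pow_right Fintype.card_pos (Nat.lt_succ_iff.mp k.2))

lemma sum_smul_pow_card_pow {ι R : Type*} [CommRing R] [Algebra F R] (s : Finset ι) (v : ι → F)
    (x : ι → R) (k : ℕ) :
    (∑ j ∈ s, v j • x j) ^ Fintype.card F ^ k = ∑ j ∈ s, v j • x j ^ Fintype.card F ^ k := by
  have frobenius_pow_apply (y : R) :
      (FiniteField.frobeniusAlgHom F R ^ k) y = y ^ Fintype.card F ^ k := by
    simp [FiniteField.coe_frobeniusAlgHom, pow_iterate]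
  simp only [← frobenius_pow_apply, map_sum, map_smul]

variable {F}

lemma aeval_linearizedPolynomial_eq_zero_of_mem_span {R S ι : Type*} [CommSemiring R]
    [CommRing S] [Algebra R S] [Algebra F S] {n : ℕ} {c : Fin n → R} {x : ι → S}
    (hx : ∀ j, Polynomial.aeval (x j) (linearizedPolynomial F c) = 0) {y : S}
    (hy : y ∈ Submodule.span F (Set.range x)) :
    Polynomial.aeval y (linearizedPolynomial F c) = 0 := by
  obtain ⟨v, rfl⟩ := Finsupp.mem_span_range_iff_exists_finsupp.mp hy
  calc Polynomial.aeval (∑ j ∈ v.support, v j • x j) (linearizedPolynomial F c)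
      = ∑ j ∈ v.support, v j • Polynomial.aeval (x j) (linearizedPolynomial F c) := by
        simp only [aeval_linearizedPolynomial, sum_smul_pow_card_pow, Finset.mul_sum,
          Finset.smul_sum, mul_smul_comm]
        exact Finset.sum_comm
    _ = 0 := by simp [hx]

lemma ncard_span_range_of_linearIndependent {V ι : Type*} [AddCommGroup V] [Module F V] [Fintype ι]
    {x : ι → V} (hx : LinearIndependent F x) :
    (Submodule.span F (Set.range x) : Set V).ncard = Fintype.card F ^ Fintype.card ι := by
  have : Module.Finite F (Submodule.span F (Set.range x)) :=
    Module.Finite.span_of_finite F (Set.finite_range x)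
  rw [← Nat.card_coe_set_eq, ← Nat.card_eq_fintype_card (α := F), ← finrank_span_eq_card hx]
  exact Module.natCard_eq_pow_finrank

lemma rootSet_linearizedPolynomial_eq_span {E K : Type*} [Field E] [Field K] [Algebra E K]
    [Algebra F K] {n : ℕ} {c : Fin (n + 1) → E} (hc : c (Fin.last n) ≠ 0) {x : Fin n → K}
    (hx : LinearIndependent F x)
    (hroot : ∀ j, Polynomial.aeval (x j) (linearizedPolynomial F c) = 0) :
    (linearizedPolynomial F c).rootSet K = Submodule.span F (Set.range x) := by
  refine (Set.eq_of_subset_of_ncard_le (fun y hy => ?_) ?_ (Polynomial.rootSet_finite _ K)).symm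
  · exact Polynomial.mem_rootSet.mpr
      ⟨linearizedPolynomial_ne_zero hc, aeval_linearizedPolynomial_eq_zero_of_mem_span hroot hy⟩
  · rw [ncard_span_range_of_linearIndependent hx, Fintype.card_fin]
    exact (Polynomial.ncard_rootSet_le _ K).trans (natDegree_linearizedPolynomial_le F c)

end LinearizedPolynomial

section Matrix

variable {n R : Type*} [Fintype n] [DecidableEq n] [CommRing R]

lemma cramer_mul_mulVec (A M : Matrix n n R) (b : n → R) :
    cramer (A * M) (A *ᵥ b) = A.det • cramer M b := by
  ext i
  have mul_updateCol : (A * M).updateCol i (A *ᵥ b) = A * M.updateCol i b := by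
    ext j k
    by_cases hk : k = i
    · subst hk; simp [Matrix.mul_apply, mulVec, dotProduct]
    · simp [Matrix.mul_apply, hk]
  rw [cramer_apply, mul_updateCol, det_mul, Pi.smul_apply, cramer_apply, smul_eq_mul]

lemma map_cramer_apply {S : Type*} [CommRing S] (f : R →+* S) (M : Matrix n n R) (b : n → R)
    (i : n) : f (cramer M b i) = cramer (M.map f) (f ∘ b) i := by
  rw [cramer_apply, cramer_apply, RingHom.map_det, RingHom.mapMatrix_apply, map_updateCol]

lemma eq_sum_mul_cramer_div_det {K : Type*} [Field K] {M : Matrix n n K} (hM : M.det ≠ 0)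
    (b : n → K) (j : n) : b j = (∑ k, M j k * cramer M b k) / M.det := by
  rw [eq_div_iff hM, mul_comm]
  exact (congrFun (mulVec_cramer M b) j).symm

lemma isHomogeneous_det {σ : Type*} {M : Matrix n n (MvPolynomial σ R)} {d : n → ℕ}
    (hM : ∀ i j, (M i j).IsHomogeneous (d j)) : M.det.IsHomogeneous (∑ j, d j) := by
  rw [det_apply']
  refine IsHomogeneous.sum _ _ _ fun e _ => ?_
  have hprod := IsHomogeneous.prod Finset.univ (fun j => M (e j) j) d fun j _ => hM _ _
  simpa using (isHomogeneous_C σ ((Equiv.Perm.sign e : ℤ) : R)).mul hprod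

end Matrix

section Moore

variable (F : Type*) [Fintype F]

/-- The Moore matrix with entries `x j ^ q ^ k`, `k < n`, where `q = #F`. -/
def mooreMatrix {ι R : Type*} [Monoid R] (n : ℕ) (x : ι → R) : Matrix ι (Fin n) R :=
  Matrix.of fun j k => x j ^ Fintype.card F ^ (k : ℕ)

/-- The maximal minor of the `n × (n + 1)` Moore matrix obtained by deleting column `k`. -/
def mooreMinor {R : Type*} [CommRing R] {n : ℕ} (x : Fin n → R) (k : Fin (n + 1)) : R :=
  ((mooreMatrix F (n + 1) x).submatrix id k.succAbove).det

lemma mooreMinor_last {R : Type*} [CommRing R] {n : ℕ} (x : Fin n → R) :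
    mooreMinor F x (Fin.last n) = (mooreMatrix F n x).det := by
  simp only [mooreMinor, Fin.succAbove_last]
  rfl

lemma map_mooreMatrix {ι R S : Type*} [Semiring R] [Semiring S] (f : R →+* S) (n : ℕ) (x : ι → R) :
    (mooreMatrix F n x).map f = mooreMatrix F n (f ∘ x) := by
  ext j k
  simp [mooreMatrix]

lemma map_mooreMinor {R S : Type*} [CommRing R] [CommRing S] (f : R →+* S) {n : ℕ} (x : Fin n → R)
    (k : Fin (n + 1)) : f (mooreMinor F x k) = mooreMinor F (f ∘ x) k := by
  rw [mooreMinor, RingHom.map_det, mooreMinor, ← map_mooreMatrix]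
  rfl

lemma det_mooreMatrix_cons {R : Type*} [CommRing R] {n : ℕ} (y : R) (x : Fin n → R) :
    (mooreMatrix F (n + 1) (Fin.cons y x : Fin (n + 1) → R)).det =
      ∑ k : Fin (n + 1), (-1) ^ (k : ℕ) * y ^ Fintype.card F ^ (k : ℕ) * mooreMinor F x k :=
  det_succ_row_zero _

lemma aeval_linearizedPolynomial_mooreMinor {E K : Type*} [CommRing E] [CommRing K] [Algebra E K]
    {n : ℕ} {x : Fin n → K} {c : Fin (n + 1) → E}
    (hc : ∀ k, algebraMap E K (c k) = (-1) ^ (k : ℕ) * mooreMinor F x k) (y : K) :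
    Polynomial.aeval y (linearizedPolynomial F c) =
      (mooreMatrix F (n + 1) (Fin.cons y x : Fin (n + 1) → K)).det := by
  rw [aeval_linearizedPolynomial, det_mooreMatrix_cons]
  simp only [hc, mul_right_comm]

variable [Field F]

lemma mooreMinor_zero {R : Type*} [CommRing R] [Algebra F R] {n : ℕ} (x : Fin n → R) :
    mooreMinor F x 0 = (mooreMatrix F n x).det ^ Fintype.card F := by
  rw [← FiniteField.frobeniusAlgHom_apply F R, AlgHom.map_det, mooreMinor]
  congr 1
  ext j k
  simp [mooreMatrix, pow_succ, pow_mul]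

variable {F}

lemma rootSet_linearizedPolynomial_mooreMinor {E K : Type*} [Field E] [Field K] [Algebra E K]
    [Algebra F K] {n : ℕ} {x : Fin n → K} (hx : LinearIndependent F x)
    (hdet : (mooreMatrix F n x).det ≠ 0) {c : Fin (n + 1) → E}
    (hc : ∀ k, algebraMap E K (c k) = (-1) ^ (k : ℕ) * mooreMinor F x k) :
    (linearizedPolynomial F c).rootSet K = Submodule.span F (Set.range x) := by
  refine rootSet_linearizedPolynomial_eq_span (fun hlast => hdet ?_) hx fun j => ?_
  · simpa [hlast, mooreMinor_last] using hc (Fin.last n)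
  · rw [aeval_linearizedPolynomial_mooreMinor F hc]
    exact det_zero_of_row_eq (Fin.succ_ne_zero j).symm (by ext; simp [mooreMatrix])

theorem det_mooreMatrix_ne_zero {K : Type*} [Field K] [Algebra F K] {n : ℕ} {x : Fin n → K}
    (hx : LinearIndependent F x) : (mooreMatrix F n x).det ≠ 0 := by
  induction n with
  | zero => simp
  | succ n ih =>
    obtain ⟨htail, hhead⟩ := linearIndependent_finSucc.mp hx
    intro hdet
    let c : Fin (n + 1) → K := fun k => (-1) ^ (k : ℕ) * mooreMinor F (Fin.tail x) k
    have hc (k) : algebraMap K K (c k) = (-1) ^ (k : ℕ) * mooreMinor F (Fin.tail x) k := rfl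
    have hc_last : c (Fin.last n) ≠ 0 := by simpa [c, mooreMinor_last] using ih htail
    apply hhead
    rw [← SetLike.mem_coe, ← rootSet_linearizedPolynomial_mooreMinor htail (ih htail) hc,
      Polynomial.mem_rootSet, aeval_linearizedPolynomial_mooreMinor F hc, Fin.cons_self_tail]
    exact ⟨linearizedPolynomial_ne_zero hc_last, hdet⟩

lemma mooreMatrix_mulVec {ι κ R : Type*} [Fintype ι] [CommRing R] [Algebra F R]
    (A : Matrix κ ι F) (n : ℕ) (x : ι → R) :
    mooreMatrix F n (A.map (algebraMap F R) *ᵥ x) =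
      A.map (algebraMap F R) * mooreMatrix F n x := by
  ext j k
  simpa [mooreMatrix, mulVec, dotProduct, Matrix.mul_apply, Algebra.smul_def] using
    sum_smul_pow_card_pow F Finset.univ (A j) x k

lemma mooreMinor_mulVec {R : Type*} [CommRing R] [Algebra F R] {n : ℕ}
    (A : Matrix (Fin n) (Fin n) F) (x : Fin n → R) (k : Fin (n + 1)) :
    mooreMinor F (A.map (algebraMap F R) *ᵥ x) k = algebraMap F R A.det * mooreMinor F x k := by
  rw [mooreMinor, mooreMatrix_mulVec, submatrix_mul _ _ id id _ Function.bijective_id, det_mul,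
    submatrix_id_id, RingHom.map_det]
  rfl

end Moore

section Galois

lemma isGalois_of_natDegree_le_ncard_rootSet {E K : Type*} [Field E] [Field K] [Algebra E K]
    {P : E[X]} (hP : P ≠ 0) (hdeg : P.natDegree ≤ (P.rootSet K).ncard)
    (htop : IntermediateField.adjoin E (P.rootSet K) = ⊤) : IsGalois E K := by
  classical
  have card_distinct_roots : (P.rootSet K).ncard = (P.aroots K).toFinset.card := by
    rw [Polynomial.rootSet_def, Set.ncard_coe_finset]
  have card_roots_le : (P.aroots K).card ≤ P.natDegree :=
    (Polynomial.card_roots' _).trans_eq (Polynomial.natDegree_map _)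
  have card_distinct_le := (P.aroots K).toFinset_card_le
  have hsplits : (P.map (algebraMap E K)).Splits := by
    rw [Polynomial.splits_iff_card_roots, Polynomial.natDegree_map]
    change (P.aroots K).card = _
    omega
  have hnodup : (P.aroots K).Nodup := by
    rw [← Multiset.toFinset_card_eq_card_iff_nodup]
    omega
  have : P.IsSplittingField E K := isSplittingField_iff_intermediateField.mpr ⟨hsplits, htop⟩
  exact IsGalois.of_separable_splitting_field
    ((Polynomial.nodup_aroots_iff_of_splits hP hsplits).mp hnodup)

variable {F K : Type*} [Field F] [Fintype F] [Field K] [Algebra F K] {n : ℕ} {x : Fin n → K}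
  {E : IntermediateField F K}

lemma exists_rootSet_eq_span_of_mooreMinor_mem (hx : LinearIndependent F x)
    (hE : ∀ k, mooreMinor F x k ∈ E) :
    ∃ P : E[X], P ≠ 0 ∧ P.natDegree ≤ Fintype.card F ^ n ∧
      P.rootSet K = Submodule.span F (Set.range x) := by
  let c (k : Fin (n + 1)) : E :=
    ⟨(-1) ^ (k : ℕ) * mooreMinor F x k, mul_mem (pow_mem (neg_mem (one_mem E)) _) (hE k)⟩
  have hdet := det_mooreMatrix_ne_zero hx
  have hc_last : c (Fin.last n) ≠ 0 := by
    simpa [c, Subtype.ext_iff, mooreMinor_last] using hdet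
  exact ⟨linearizedPolynomial F c, linearizedPolynomial_ne_zero hc_last,
    natDegree_linearizedPolynomial_le F c,
    rootSet_linearizedPolynomial_mooreMinor hx hdet fun _ => rfl⟩

theorem isGalois_of_mooreMinor_mem (hx : LinearIndependent F x) (hE : ∀ k, mooreMinor F x k ∈ E)
    (htop : IntermediateField.adjoin E (Set.range x) = ⊤) : IsGalois E K := by
  obtain ⟨P, hP, hdeg, hroots⟩ := exists_rootSet_eq_span_of_mooreMinor_mem hx hE
  refine isGalois_of_natDegree_le_ncard_rootSet hP ?_ (eq_top_iff.mpr ?_)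
  · rwa [hroots, ncard_span_range_of_linearIndependent hx, Fintype.card_fin]
  · rw [← htop, hroots]
    exact IntermediateField.adjoin.mono _ _ _ Submodule.subset_span

theorem exists_det_eq_one_of_mooreMinor_mem (hx : LinearIndependent F x)
    (hE : ∀ k, mooreMinor F x k ∈ E) (τ : K ≃ₐ[E] K) :
    ∃ A : Matrix (Fin n) (Fin n) F, A.det = 1 ∧ τ ∘ x = A.map (algebraMap F K) *ᵥ x := by
  obtain ⟨P, hP, -, hroots⟩ := exists_rootSet_eq_span_of_mooreMinor_mem hx hE
  have image_mem_span (j : Fin n) : τ (x j) ∈ Submodule.span F (Set.range x) := by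
    have hxj : x j ∈ P.rootSet K := hroots ▸ Submodule.subset_span (Set.mem_range_self j)
    rw [← SetLike.mem_coe, ← hroots, Polynomial.mem_rootSet]
    exact ⟨hP, by rw [Polynomial.aeval_algHom_apply τ, (Polynomial.mem_rootSet.mp hxj).2, map_zero]⟩
  obtain ⟨A, hA⟩ : ∃ A : Matrix (Fin n) (Fin n) F, ∀ j, ∑ l, A j l • x l = τ (x j) :=
    Classical.skolem.mp fun j =>
      (Submodule.mem_span_range_iff_exists_fun F).mp (image_mem_span j)
  have hτ : τ ∘ x = A.map (algebraMap F K) *ᵥ x := by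
    ext j
    simp [← hA, mulVec, dotProduct, Algebra.smul_def]
  refine ⟨A, (algebraMap F K).injective ?_, hτ⟩
  have hdet : mooreMinor F x (Fin.last n) ≠ 0 := by
    rw [mooreMinor_last]
    exact det_mooreMatrix_ne_zero hx
  refine mul_right_cancel₀ hdet ?_
  calc algebraMap F K A.det * mooreMinor F x (Fin.last n)
      = mooreMinor F (τ ∘ x) (Fin.last n) := by rw [hτ, mooreMinor_mulVec]
    _ = τ (mooreMinor F x (Fin.last n)) := (map_mooreMinor F (τ : K →+* K) x _).symm
    _ = mooreMinor F x (Fin.last n) := τ.commutes ⟨_, hE _⟩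
    _ = algebraMap F K 1 * mooreMinor F x (Fin.last n) := by rw [map_one, one_mul]

end Galois

section VectorInvariants

lemma adjoin_image_algebraMap_eq_top {k A L : Type*} [Field k] [CommRing A] [Algebra k A] [Field L]
    [Algebra k L] [Algebra A L] [IsScalarTower k A L] [IsFractionRing A L] {s : Set A}
    (hs : Algebra.adjoin k s = ⊤) : IntermediateField.adjoin k (algebraMap A L '' s) = ⊤ := by
  have algebraMap_mem (a : A) :
      algebraMap A L a ∈ IntermediateField.adjoin k (algebraMap A L '' s) := by
    apply IntermediateField.algebra_adjoin_le_adjoin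
    rw [← IsScalarTower.coe_toAlgHom' k A L, ← AlgHom.map_adjoin, hs]
    exact ⟨a, Algebra.mem_top, rfl⟩
  refine eq_top_iff.mpr fun z _ => ?_
  obtain ⟨a, b, -, rfl⟩ := IsFractionRing.div_surjective A z
  exact div_mem (algebraMap_mem a) (algebraMap_mem b)

variable {F : Type} [Field F] {m n : ℕ}

/-- The column vector `X_i = ᵗ(x_{i1}, …, x_{in})` of variables. -/
def columnVector (F : Type) [Field F] {m : ℕ} (n : ℕ) (i : Fin m) : Fin n → PolyMW F m n :=
  fun j => X (i, j)

lemma matSub_comp_columnVector (A : Matrix (Fin n) (Fin n) F) (i : Fin m) :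
    matSub A ∘ columnVector F n i = A.map (algebraMap F _) *ᵥ columnVector F n i := by
  ext1 j
  simp [matSub, columnVector, mulVec, dotProduct, MvPolynomial.algebraMap_eq]

lemma fracAct_algebraMap (σ : GL (Fin n) F) (p : PolyMW F m n) :
    fracAct σ (algebraMap _ _ p) =
      algebraMap _ (RatMW F m n) (matSub (σ : Matrix (Fin n) (Fin n) F) p) :=
  IsFractionRing.ringEquivOfRingEquiv_algebraMap _ _

lemma fracAct_comp_columnVector (σ : GL (Fin n) F) (i : Fin m) :
    fracAct σ ∘ (algebraMap (PolyMW F m n) (RatMW F m n) ∘ columnVector F n i) =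
      (σ : Matrix (Fin n) (Fin n) F).map (algebraMap F (RatMW F m n)) *ᵥ
        (algebraMap (PolyMW F m n) (RatMW F m n) ∘ columnVector F n i) := by
  ext j
  have hj := congrFun (matSub_comp_columnVector (σ : Matrix (Fin n) (Fin n) F) i) j
  rw [Function.comp_apply] at hj
  rw [Function.comp_apply, Function.comp_apply, fracAct_algebraMap, hj]
  simp [mulVec, dotProduct, IsScalarTower.algebraMap_apply F (PolyMW F m n) (RatMW F m n)]

lemma fracAct_algebraMap_base (σ : GL (Fin n) F) (a : F) :
    fracAct σ (algebraMap F (RatMW F m n) a) = algebraMap F _ a := by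
  rw [IsScalarTower.algebraMap_apply F (PolyMW F m n), fracAct_algebraMap, AlgHom.commutes]

lemma mem_SLsub_iff {σ : GL (Fin n) F} :
    σ ∈ SLsub F n ↔ (σ : Matrix (Fin n) (Fin n) F).det = 1 := by
  rw [SLsub, MonoidHom.mem_ker, Units.ext_iff]
  rfl

lemma linearIndependent_columnVector (i : Fin m) :
    LinearIndependent F (algebraMap (PolyMW F m n) (RatMW F m n) ∘ columnVector F n i) := by
  have hX : LinearIndependent F (columnVector F n i) :=
    (linearIndependent_X _ F).comp _ (Prod.mk_right_injective i)
  exact hX.map_injOn (IsScalarTower.toAlgHom F (PolyMW F m n) (RatMW F m n)).toLinearMap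
    (IsFractionRing.injective _ _).injOn

variable [Fintype F]

variable (F n) in
/-- The `mn` generators, relative to a base index `i₀`: for `i = i₀` the maximal minors of the
`n × (n + 1)` Moore matrix of `X_{i₀}` other than the zeroth one (which is the `q`-th power of the
last), and for `i ≠ i₀` the Cramer numerators of the system expressing `X_i` through the columns of
the Moore matrix of `X_{i₀}`. -/
def slGenerator (i₀ : Fin m) (p : Fin m × Fin n) : PolyMW F m n :=
  if p.1 = i₀ then mooreMinor F (columnVector F n i₀) p.2.succ
  else cramer (mooreMatrix F n (columnVector F n i₀)) (columnVector F n p.1) p.2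

lemma slGenerator_self (i₀ : Fin m) (k : Fin n) :
    slGenerator F n i₀ (i₀, k) = mooreMinor F (columnVector F n i₀) k.succ :=
  if_pos rfl

lemma slGenerator_of_ne {i₀ i : Fin m} (hi : i ≠ i₀) (k : Fin n) :
    slGenerator F n i₀ (i, k) =
      cramer (mooreMatrix F n (columnVector F n i₀)) (columnVector F n i) k :=
  if_neg hi

lemma isHomogeneous_slGenerator (i₀ : Fin m) (p : Fin m × Fin n) :
    ∃ d, (slGenerator F n i₀ p).IsHomogeneous d := by
  have isHomogeneous_entry (N : ℕ) (j : Fin n) (k : Fin N) :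
      (mooreMatrix F N (columnVector F n i₀) j k).IsHomogeneous (Fintype.card F ^ (k : ℕ)) := by
    simpa [mooreMatrix, columnVector] using
      (isHomogeneous_X F (i₀, j)).pow (Fintype.card F ^ (k : ℕ))
  unfold slGenerator
  split_ifs
  · exact ⟨_, isHomogeneous_det fun j k => isHomogeneous_entry (n + 1) j (p.2.succ.succAbove k)⟩
  · rw [cramer_apply]
    refine ⟨_, isHomogeneous_det
      (d := Function.update (fun k : Fin n => Fintype.card F ^ (k : ℕ)) p.2 1) fun j k => ?_⟩
    obtain rfl | hk := eq_or_ne k p.2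
    · simpa [columnVector] using isHomogeneous_X F (p.1, j)
    · simpa [hk] using isHomogeneous_entry n j k

lemma matSub_slGenerator (A : Matrix (Fin n) (Fin n) F) (i₀ : Fin m) (p : Fin m × Fin n) :
    matSub A (slGenerator F n i₀ p) = algebraMap F _ A.det * slGenerator F n i₀ p := by
  let φ : PolyMW F m n →+* PolyMW F m n := (matSub A).toRingHom
  have hφ (i : Fin m) : φ ∘ columnVector F n i = _ := matSub_comp_columnVector A i
  unfold slGenerator
  split_ifs
  · exact (map_mooreMinor F φ _ _).trans (by rw [hφ, mooreMinor_mulVec])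
  · refine (map_cramer_apply φ _ _ _).trans ?_
    rw [map_mooreMatrix, hφ, hφ, mooreMatrix_mulVec, cramer_mul_mulVec, RingHom.map_det]
    rfl

variable (F n) in
/-- The subfield `𝔽_q(f_1, …, f_{mn})` of `𝔽_q(mW)` generated by the polynomials `slGenerator`. -/
def slGeneratorField (i₀ : Fin m) : IntermediateField F (RatMW F m n) :=
  IntermediateField.adjoin F
    (Set.range fun p => algebraMap (PolyMW F m n) (RatMW F m n) (slGenerator F n i₀ p))

lemma algebraMap_slGenerator_mem (i₀ : Fin m) (p : Fin m × Fin n) :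
    algebraMap (PolyMW F m n) (RatMW F m n) (slGenerator F n i₀ p) ∈ slGeneratorField F n i₀ :=
  IntermediateField.subset_adjoin _ _ ⟨p, rfl⟩

lemma mooreMinor_mem_slGeneratorField (i₀ : Fin m) (k : Fin (n + 1)) :
    mooreMinor F (algebraMap (PolyMW F m n) (RatMW F m n) ∘ columnVector F n i₀) k ∈
      slGeneratorField F n i₀ := by
  have succ_mem (k : Fin n) :
      mooreMinor F (algebraMap (PolyMW F m n) (RatMW F m n) ∘ columnVector F n i₀) k.succ ∈
        slGeneratorField F n i₀ := by
    rw [← map_mooreMinor, ← slGenerator_self]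
    exact algebraMap_slGenerator_mem i₀ _
  refine Fin.cases ?_ succ_mem k
  rw [mooreMinor_zero, ← mooreMinor_last]
  cases n with
  | zero => simp [mooreMinor]
  | succ n => exact pow_mem (succ_mem (Fin.last n)) _

lemma adjoin_columnVector_eq_top (i₀ : Fin m) :
    IntermediateField.adjoin (slGeneratorField F n i₀)
      (Set.range (algebraMap (PolyMW F m n) (RatMW F m n) ∘ columnVector F n i₀)) = ⊤ := by
  set x := algebraMap (PolyMW F m n) (RatMW F m n) ∘ columnVector F n i₀
  set T := IntermediateField.adjoin (slGeneratorField F n i₀) (Set.range x)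
  have mem_of_mem {a} (ha : a ∈ slGeneratorField F n i₀) : a ∈ T := T.algebraMap_mem ⟨a, ha⟩
  have x_mem (j) : x j ∈ T := IntermediateField.subset_adjoin _ _ ⟨j, rfl⟩
  have X_mem (i : Fin m) (j : Fin n) :
      algebraMap (PolyMW F m n) (RatMW F m n) (columnVector F n i j) ∈ T := by
    obtain rfl | hi := eq_or_ne i i₀
    · exact x_mem j
    have hdet := det_mooreMatrix_ne_zero (linearIndependent_columnVector (F := F) (n := n) i₀)
    have hj := eq_sum_mul_cramer_div_det hdet
      (algebraMap (PolyMW F m n) (RatMW F m n) ∘ columnVector F n i) j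
    rw [Function.comp_apply] at hj
    rw [hj, ← mooreMinor_last]
    refine div_mem (sum_mem fun k _ => mul_mem (pow_mem (x_mem j) _) (mem_of_mem ?_))
      (mem_of_mem (mooreMinor_mem_slGeneratorField i₀ _))
    rw [← map_mooreMatrix, ← map_cramer_apply, ← slGenerator_of_ne hi]
    exact algebraMap_slGenerator_mem i₀ _
  rw [← IntermediateField.restrictScalars_eq_top_iff (K := F), eq_top_iff,
    ← adjoin_image_algebraMap_eq_top (adjoin_range_X (R := F) (σ := Fin m × Fin n)),
    IntermediateField.adjoin_le_iff]
  rintro _ ⟨_, ⟨⟨i, j⟩, rfl⟩, rfl⟩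
  exact X_mem i j

lemma slGeneratorField_le_fixedSubfield (i₀ : Fin m) :
    (slGeneratorField F n i₀).toSubfield ≤ fixedSubfield F m n (SLsub F n) := by
  rw [slGeneratorField, IntermediateField.adjoin_toSubfield, Subfield.closure_le]
  rintro _ (⟨a, rfl⟩ | ⟨p, rfl⟩) σ hσ
  · exact fracAct_algebraMap_base σ a
  · rw [fracAct_algebraMap, matSub_slGenerator, mem_SLsub_iff.mp hσ, map_one, one_mul]

lemma exists_fracAct_eq_algEquiv (i₀ : Fin m)
    (τ : RatMW F m n ≃ₐ[slGeneratorField F n i₀] RatMW F m n) :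
    ∃ σ ∈ SLsub F n, ∀ a, fracAct σ a = τ a := by
  let K₀ := slGeneratorField F n i₀
  let x := algebraMap (PolyMW F m n) (RatMW F m n) ∘ columnVector F n i₀
  have hx : LinearIndependent F x := linearIndependent_columnVector i₀
  obtain ⟨A, hA, hτ⟩ :=
    exists_det_eq_one_of_mooreMinor_mem hx (mooreMinor_mem_slGeneratorField i₀) τ
  let σ : GL (Fin n) F := Matrix.GeneralLinearGroup.mkOfDetNeZero A (hA ▸ one_ne_zero)
  have hσ : σ ∈ SLsub F n := mem_SLsub_iff.mpr hA
  have hσx : fracAct σ ∘ x = τ ∘ x := (fracAct_comp_columnVector σ i₀).trans hτ.symm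
  have hσE (e : K₀) : fracAct σ (algebraMap K₀ (RatMW F m n) e) =
      τ (algebraMap K₀ (RatMW F m n) e) := by
    rw [τ.commutes]
    exact slGeneratorField_le_fixedSubfield i₀ e.2 σ hσ
  have hclosure : Subfield.closure (Set.range (algebraMap K₀ (RatMW F m n)) ∪ Set.range x) = ⊤ := by
    rw [← IntermediateField.adjoin_toSubfield, adjoin_columnVector_eq_top,
      IntermediateField.top_toSubfield]
  refine ⟨σ, hσ, RingHom.congr_fun
    (RingHom.eq_of_eqOn_of_field_closure_eq_top (g := τ.toRingEquiv.toRingHom) hclosure ?_)⟩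
  rintro _ (⟨e, rfl⟩ | ⟨j, rfl⟩)
  · exact hσE e
  · exact congrFun hσx j

theorem fixedSubfield_SLsub_eq (i₀ : Fin m) :
    fixedSubfield F m n (SLsub F n) = (slGeneratorField F n i₀).toSubfield := by
  refine le_antisymm (fun a ha => ?_) (slGeneratorField_le_fixedSubfield i₀)
  have : IsGalois (slGeneratorField F n i₀) (RatMW F m n) :=
    isGalois_of_mooreMinor_mem (linearIndependent_columnVector i₀)
      (mooreMinor_mem_slGeneratorField i₀) (adjoin_columnVector_eq_top i₀)
  have ha_bot : a ∈ (⊥ : IntermediateField (slGeneratorField F n i₀) (RatMW F m n)) := by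
    refine (InfiniteGalois.mem_bot_iff_fixed a).mpr fun τ => ?_
    obtain ⟨σ, hσ, hστ⟩ := exists_fracAct_eq_algEquiv i₀ τ
    exact (hστ a).symm.trans (ha σ hσ)
  obtain ⟨e, rfl⟩ := IntermediateField.mem_bot.mp ha_bot
  exact e.2

end VectorInvariants

/-- For every `m, n ≥ 1` there exist `mn` homogeneous polynomials in the invariant ring
`𝔽_q[mW]^{SL_n(𝔽_q)}` that generate the invariant field `𝔽_q(mW)^{SL_n(𝔽_q)}` over `𝔽_q`. -/
theorem invariant_field_gen_SL (F : Type) [Field F] [Fintype F] (m n : ℕ)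
    (hm : 1 ≤ m) (hn : 1 ≤ n) :
    ∃ f : Fin (m * n) → PolyMW F m n,
      (∀ i, (∃ d : ℕ, (f i).IsHomogeneous d) ∧
        (∀ σ ∈ SLsub F n, matSub ((σ : GL (Fin n) F) : Matrix (Fin n) (Fin n) F) (f i) = f i)) ∧
      fixedSubfield F m n (SLsub F n) =
        (IntermediateField.adjoin F
          (Set.range fun i =>
            algebraMap (PolyMW F m n) (RatMW F m n) (f i))).toSubfield := by
  refine ⟨fun i => slGenerator F n ⟨0, hm⟩ (finProdFinEquiv.symm i),
    fun i => ⟨isHomogeneous_slGenerator _ _, fun σ hσ => ?_⟩, ?_⟩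
  · rw [matSub_slGenerator, mem_SLsub_iff.mp hσ, map_one, one_mul]
  · rw [fixedSubfield_SLsub_eq ⟨0, hm⟩, slGeneratorField,
      ← finProdFinEquiv.symm.surjective.range_comp]
    rfl

end
end

section
/- Let V be a faithful k-dimensional representation of a finite group H over a field 𝔽 and let G ≤ H be a subgroup. Suppose there exist f_1,…,f_k ∈ 𝔽(V)^G with 𝔽(V)^G = 𝔽(f_1,…,f_k), and there exists a homogeneous polynomial f ∈ 𝔽[f_1,…,f_k] ∩ 𝔽[V]^G such that 𝔽[f_1,…,f_k][f^{-1}] ⊆ 𝔽[V]^G[f^{-1}] inside 𝔽(V). If in addition 𝔽[V]^H ⊆ 𝔽[f_1,…,f_k][f^{-1}], then 𝔽[V]^G[f^{-1}] = 𝔽[f_1,…,f_k][f^{-1}]. -/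
open MvPolynomial Matrix

set_option maxHeartbeats 1000000
set_option synthInstance.maxHeartbeats 400000

noncomputable section

/-- The polynomial ring `𝔽[V]` of a `k`-dimensional representation `V`:
a polynomial ring in `k` variables. -/
abbrev PolyV (F : Type) [Field F] (k : ℕ) : Type := MvPolynomial (Fin k) F

/-- The rational function field `𝔽(V)`. -/
abbrev RatV (F : Type) [Field F] (k : ℕ) : Type := FractionRing (PolyV F k)

/-- The substitution endomorphism of `𝔽[V]` induced by a matrix `σ`. -/
def matSubV {F : Type} [Field F] {k : ℕ} (σ : Matrix (Fin k) (Fin k) F) :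
    PolyV F k →ₐ[F] PolyV F k :=
  aeval fun j => ∑ l, C (σ j l) * X l

lemma matSubV_comp {F : Type} [Field F] {k : ℕ} (A B : Matrix (Fin k) (Fin k) F) :
    (matSubV (F := F) A).comp (matSubV B) = matSubV (B * A) := by
  apply MvPolynomial.algHom_ext
  intro j
  simp only [AlgHom.coe_comp, Function.comp_apply, matSubV, aeval_X, map_sum, _root_.map_mul,
    aeval_C, MvPolynomial.algebraMap_eq, Finset.mul_sum]
  rw [Finset.sum_comm]
  refine Finset.sum_congr rfl fun s _ => ?_
  calc ∑ l, C (B j l) * (C (A l s) * X s)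
      = (∑ l, C (B j l * A l s)) * X s := by
        rw [Finset.sum_mul]
        simp [C_mul, mul_assoc]
    _ = C ((B * A) j s) * X s := by
        rw [Matrix.mul_apply, map_sum]

lemma matSubV_one {F : Type} [Field F] {k : ℕ} :
    matSubV (F := F) (1 : Matrix (Fin k) (Fin k) F) = AlgHom.id F _ := by
  apply MvPolynomial.algHom_ext
  intro j
  simp [matSubV, Matrix.one_apply, ite_mul, apply_ite (C (σ := Fin k) (R := F))]

/-- The algebra automorphism of `𝔽[V]` induced by `σ ∈ GL_k(𝔽)`. -/
def matAutV {F : Type} [Field F] {k : ℕ} (σ : GL (Fin k) F) :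
    PolyV F k ≃ₐ[F] PolyV F k :=
  AlgEquiv.ofAlgHom (matSubV (σ : Matrix (Fin k) (Fin k) F))
    (matSubV ((↑(σ⁻¹) : Matrix (Fin k) (Fin k) F)))
    (by rw [matSubV_comp, σ.inv_mul, matSubV_one])
    (by rw [matSubV_comp, σ.mul_inv, matSubV_one])

/-- The automorphism of `𝔽(V)` induced by `σ ∈ GL_k(𝔽)`. -/
def fracActV {F : Type} [Field F] {k : ℕ} (σ : GL (Fin k) F) :
    RatV F k →+* RatV F k :=
  (IsFractionRing.ringEquivOfRingEquiv
    ((matAutV (F := F) (k := k) σ).toRingEquiv) :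
    RatV F k ≃+* RatV F k).toRingHom

/-!
The algebra `𝔽[f₁,…,f_k][f⁻¹]` contains `𝔽[V]^H`, over which `𝔽[V]` is integral, and lies in
`𝔽(f₁,…,f_k)`. Hence `𝔽(V)` is algebraic over `𝔽(f₁,…,f_k)`, and comparing transcendence degrees
shows that the `fᵢ` are algebraically independent. So `𝔽[f₁,…,f_k]` is a polynomial ring, and its
localization `𝔽[f₁,…,f_k][f⁻¹]` is integrally closed in `𝔽(f₁,…,f_k) = 𝔽(V)^G`. The elements of
`𝔽[V]^G` are integral over this localization and lie in its fraction field, hence in it.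
-/

section AdjoinInv

variable {B K : Type*} [CommRing B] [Field K] [Algebra B K]

lemma exists_pow_mul_eq_algebraMap_of_mem_adjoin_inv {b : B} (hb : algebraMap B K b ≠ 0) {x : K}
    (hx : x ∈ Algebra.adjoin B {(algebraMap B K b)⁻¹}) :
    ∃ (n : ℕ) (c : B), x * algebraMap B K b ^ n = algebraMap B K c := by
  induction hx using Algebra.adjoin_induction with
  | mem x hx =>
    obtain rfl := Set.mem_singleton_iff.mp hx
    exact ⟨1, 1, by rw [pow_one, inv_mul_cancel₀ hb, map_one]⟩
  | algebraMap c => exact ⟨0, c, by rw [pow_zero, mul_one]⟩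
  | add x y _ _ hx hy =>
    obtain ⟨n, c, hc⟩ := hx
    obtain ⟨m, d, hd⟩ := hy
    refine ⟨n + m, c * b ^ m + d * b ^ n, ?_⟩
    simp only [map_add, map_mul, map_pow, ← hc, ← hd]
    ring
  | mul x y _ _ hx hy =>
    obtain ⟨n, c, hc⟩ := hx
    obtain ⟨m, d, hd⟩ := hy
    refine ⟨n + m, c * d, ?_⟩
    rw [map_mul, ← hc, ← hd]
    ring

lemma isLocalization_away_adjoin_inv [FaithfulSMul B K] {b : B} (hb : algebraMap B K b ≠ 0) :
    IsLocalization.Away b (Algebra.adjoin B {(algebraMap B K b)⁻¹}) where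
  map_units := by
    rintro ⟨_, n, rfl⟩
    have hunit : IsUnit (algebraMap B (Algebra.adjoin B {(algebraMap B K b)⁻¹}) b) :=
      .of_mul_eq_one ⟨_, Algebra.self_mem_adjoin_singleton B _⟩ (Subtype.ext (mul_inv_cancel₀ hb))
    simpa only [map_pow] using hunit.pow n
  surj := by
    rintro ⟨x, hx⟩
    obtain ⟨n, c, hc⟩ := exists_pow_mul_eq_algebraMap_of_mem_adjoin_inv hb hx
    exact ⟨(c, ⟨b ^ n, n, rfl⟩), Subtype.ext (by simpa using hc)⟩
  exists_of_eq {c d} h :=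
    ⟨1, congrArg _ (FaithfulSMul.algebraMap_injective B K (congrArg Subtype.val h))⟩

lemma exists_isIntegral_pow_smul_of_isIntegral_adjoin_inv [FaithfulSMul B K] {b : B}
    (hb : algebraMap B K b ≠ 0) {x : K}
    (hx : IsIntegral (Algebra.adjoin B {(algebraMap B K b)⁻¹}) x) :
    ∃ n : ℕ, IsIntegral B (b ^ n • x) := by
  have := isLocalization_away_adjoin_inv hb
  obtain ⟨⟨_, n, rfl⟩, hn⟩ :=
    IsIntegral.exists_multiple_integral_of_isLocalization (Submonoid.powers b) x hx
  exact ⟨n, hn⟩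

lemma algebraMap_mem_adjoin_inv_of_isIntegral {L : Type*} [CommRing L] [Algebra B L]
    [IsIntegrallyClosedIn B L] [Algebra L K] [FaithfulSMul L K] [IsScalarTower B L K] {b : B}
    (hb : algebraMap B K b ≠ 0) {x : L}
    (hx : IsIntegral (Algebra.adjoin B {(algebraMap B K b)⁻¹}) (algebraMap L K x)) :
    algebraMap L K x ∈ Algebra.adjoin B {(algebraMap B K b)⁻¹} := by
  have : FaithfulSMul B L :=
    (faithfulSMul_iff_algebraMap_injective B L).mpr (IsIntegralClosure.algebraMap_injective B B L)
  have : FaithfulSMul B K := FaithfulSMul.trans B L K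
  obtain ⟨n, hn⟩ := exists_isIntegral_pow_smul_of_isIntegral_adjoin_inv hb hx
  have hnL : IsIntegral B (b ^ n • x) := by
    rwa [← isIntegral_algHom_iff (IsScalarTower.toAlgHom B L K)
      (FaithfulSMul.algebraMap_injective L K), map_smul]
  obtain ⟨c, hc⟩ := IsIntegrallyClosedIn.isIntegral_iff.mp hnL
  have hxc : algebraMap L K x = c • (algebraMap B K b)⁻¹ ^ n := by
    rw [Algebra.smul_def, IsScalarTower.algebraMap_apply B L K, hc, Algebra.smul_def, map_mul,
      ← IsScalarTower.algebraMap_apply, map_pow, mul_right_comm, ← mul_pow, mul_inv_cancel₀ hb,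
      one_pow, one_mul]
  rw [hxc]
  exact Subalgebra.smul_mem _ (pow_mem (Algebra.self_mem_adjoin_singleton B _) n) c

end AdjoinInv

lemma isIntegrallyClosed_adjoin_range {R S ι : Type*} [CommRing R] [IsDomain R]
    [UniqueFactorizationMonoid R] [CommRing S] [Algebra R S] {f : ι → S}
    (hf : AlgebraicIndependent R f) : IsIntegrallyClosed (Algebra.adjoin R (Set.range f)) :=
  IsIntegrallyClosed.of_equiv hf.aevalEquiv.toRingEquiv

open IntermediateField.algebraAdjoinAdjoin in
lemma mem_adjoin_range_union_inv_of_isIntegral {F K ι : Type*} [Field F] [Field K] [Algebra F K]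
    {f : ι → K} (hf : AlgebraicIndependent F f) {P : K} (hP₀ : P ≠ 0)
    (hP : P ∈ Algebra.adjoin F (Set.range f)) {x : K}
    (hx : IsIntegral (Algebra.adjoin F (Set.range f ∪ {P⁻¹})) x)
    (hxf : x ∈ IntermediateField.adjoin F (Set.range f)) :
    x ∈ Algebra.adjoin F (Set.range f ∪ {P⁻¹}) := by
  have := isIntegrallyClosed_adjoin_range hf
  have : IsIntegrallyClosedIn (Algebra.adjoin F (Set.range f))
      (IntermediateField.adjoin F (Set.range f)) :=
    (isIntegrallyClosed_iff_isIntegrallyClosedIn _).mp this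
  rw [Algebra.adjoin_union_eq_adjoin_adjoin] at hx ⊢
  exact algebraMap_mem_adjoin_inv_of_isIntegral (B := Algebra.adjoin F (Set.range f))
    (L := IntermediateField.adjoin F (Set.range f)) (b := ⟨P, hP⟩) (x := ⟨x, hxf⟩) hP₀ hx

lemma adjoin_union_inv_le_adjoin {F K : Type*} [Field F] [Field K] [Algebra F K] {s : Set K}
    {P : K} (hP : P ∈ Algebra.adjoin F s) :
    Algebra.adjoin F (s ∪ {P⁻¹}) ≤ (IntermediateField.adjoin F s).toSubalgebra := by
  have hPinv : P⁻¹ ∈ IntermediateField.adjoin F s :=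
    inv_mem (IntermediateField.algebra_adjoin_le_adjoin F s hP)
  exact Algebra.adjoin_le
    (Set.union_subset (IntermediateField.subset_adjoin F s) (Set.singleton_subset_iff.mpr hPinv))

lemma isIntegral_algebraMap_of_image_subset {R A S : Type*} [CommRing R] [CommRing A] [CommRing S]
    [Algebra R A] [Algebra A S] [Algebra R S] [IsScalarTower R A S] {A₀ : Subalgebra R A}
    [Algebra.IsIntegral A₀ A] {B : Subalgebra R S} (h : algebraMap A S '' A₀ ⊆ B) (a : A) :
    IsIntegral B (algebraMap A S a) := by
  let φ : A₀ →ₐ[R] B := ((IsScalarTower.toAlgHom R A S).comp A₀.val).codRestrict B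
    fun a₀ => h (Set.mem_image_of_mem _ a₀.2)
  exact (Algebra.IsIntegral.isIntegral (R := A₀) a).map_of_comp_eq φ.toRingHom (algebraMap A S) rfl

lemma isAlgebraic_of_forall_isIntegral_algebraMap (A : Type*) {L K : Type*} [CommRing A] [Field K]
    [Algebra A K] [IsFractionRing A K] [CommRing L] [IsDomain L] [Algebra L K]
    (h : ∀ a : A, IsIntegral L (algebraMap A K a)) : Algebra.IsAlgebraic L K where
  isAlgebraic x := by
    obtain ⟨a, b, -, rfl⟩ := IsFractionRing.div_surjective (A := A) x
    rw [div_eq_mul_inv]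
    exact (h a).isAlgebraic.mul (h b).isAlgebraic.inv

open IntermediateField.algebraAdjoinAdjoin in
lemma algebraicIndependent_of_isAlgebraic_adjoin {F K ι : Type*} [Field F] [Field K] [Algebra F K]
    [Finite ι] {f : ι → K} [Algebra.IsAlgebraic (IntermediateField.adjoin F (Set.range f)) K]
    (hcard : (Nat.card ι : Cardinal) ≤ Algebra.trdeg F K) :
    AlgebraicIndependent F f := by
  have : Algebra.IsAlgebraic (Algebra.adjoin F (Set.range f)) K :=
    .trans _ (IntermediateField.adjoin F (Set.range f)) _
  refine (Algebra.IsAlgebraic.isTranscendenceBasis_of_lift_le_trdeg_of_finite F f ?_).1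
  simpa only [← Nat.cast_card, Cardinal.lift_natCast, Cardinal.nat_le_lift_iff] using hcard

/-- The algebra `A₀` takes the place of `𝔽[V]^H`, and `R` that of `𝔽[V]^G`. -/
theorem localized_criterion_full_invariants_general {F A K ι : Type*} [Field F] [CommRing A]
    [Algebra F A] [Field K] [Algebra A K] [IsFractionRing A K] [Algebra F K] [IsScalarTower F A K]
    (A₀ : Subalgebra F A) [Algebra.IsIntegral A₀ A] (R : Set A) [Finite ι] (f : ι → K)
    (hcard : (Nat.card ι : Cardinal) ≤ Algebra.trdeg F K)
    (hR : algebraMap A K '' R ⊆ IntermediateField.adjoin F (Set.range f))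
    (P : K) (hP₀ : P ≠ 0) (hP : P ∈ Algebra.adjoin F (Set.range f))
    (hsub : Algebra.adjoin F (Set.range f ∪ {P⁻¹}) ≤
      Algebra.adjoin F (algebraMap A K '' R ∪ {P⁻¹}))
    (hA₀ : algebraMap A K '' A₀ ⊆ Algebra.adjoin F (Set.range f ∪ {P⁻¹})) :
    Algebra.adjoin F (algebraMap A K '' R ∪ {P⁻¹}) =
      Algebra.adjoin F (Set.range f ∪ {P⁻¹}) := by
  have : Algebra.IsAlgebraic (IntermediateField.adjoin F (Set.range f)) K :=
    isAlgebraic_of_forall_isIntegral_algebraMap A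
      (isIntegral_algebraMap_of_image_subset (hA₀.trans (adjoin_union_inv_le_adjoin hP)))
  have hf : AlgebraicIndependent F f := algebraicIndependent_of_isAlgebraic_adjoin hcard
  refine le_antisymm (Algebra.adjoin_le (Set.union_subset ?_ ?_)) hsub
  · rintro _ ⟨r, hr, rfl⟩
    exact mem_adjoin_range_union_inv_of_isIntegral hf hP₀ hP
      (isIntegral_algebraMap_of_image_subset hA₀ r) (hR ⟨r, hr, rfl⟩)
  · exact Set.subset_union_right.trans Algebra.subset_adjoin

section LinearInvariants

variable {F : Type} [Field F] {k : ℕ}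

/-- The linear action of `GL_k(𝔽)` on `𝔽[V]`. The inverse is there because substitution reverses
products of matrices, so that `matAutV` itself is a right action. -/
def polyVAction : GL (Fin k) F →* (PolyV F k ≃ₐ[F] PolyV F k) where
  toFun σ := matAutV σ⁻¹
  map_one' := AlgEquiv.ext fun r => by simp [matAutV, matSubV_one]
  map_mul' σ τ := AlgEquiv.ext fun r => by
    simpa [matAutV] using (DFunLike.congr_fun (matSubV_comp _ _) r).symm

lemma polyVAction_inv_apply (σ : GL (Fin k) F) (r : PolyV F k) :
    polyVAction σ⁻¹ r = matSubV (σ : Matrix (Fin k) (Fin k) F) r := by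
  simp [polyVAction, matAutV]

/-- The ring `𝔽[V]^H` of polynomial invariants of the representation `ρ` of `H`. -/
def polyVInvariants {H : Type*} [Monoid H] (ρ : H →* GL (Fin k) F) : Subalgebra F (PolyV F k) where
  carrier := {r | ∀ h : H, matSubV ((ρ h : GL (Fin k) F) : Matrix (Fin k) (Fin k) F) r = r}
  mul_mem' hr hs h := by rw [map_mul, hr h, hs h]
  add_mem' hr hs h := by rw [map_add, hr h, hs h]
  algebraMap_mem' c _ := AlgHom.commutes _ c

instance isIntegral_polyVInvariants {H : Type*} [Group H] [Finite H] (ρ : H →* GL (Fin k) F) :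
    Algebra.IsIntegral (polyVInvariants ρ) (PolyV F k) := by
  let _ : MulSemiringAction H (PolyV F k) := .compHom _ (polyVAction.comp ρ)
  have : Algebra.IsInvariant (polyVInvariants ρ) (PolyV F k) H :=
    ⟨fun r hr => ⟨⟨r, fun h => by
      rw [← polyVAction_inv_apply, ← map_inv]
      exact hr h⁻¹⟩, rfl⟩⟩
  exact Algebra.IsInvariant.isIntegral _ _ H

lemma fracActV_algebraMap (σ : GL (Fin k) F) (r : PolyV F k) :
    fracActV σ (algebraMap (PolyV F k) (RatV F k) r) =
      algebraMap (PolyV F k) (RatV F k) (matSubV (σ : Matrix (Fin k) (Fin k) F) r) :=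
  IsFractionRing.ringEquivOfRingEquiv_algebraMap _ r

lemma algebraMap_image_invariants_subset {H : Type*} [Group H] (ρ : H →* GL (Fin k) F)
    (G : Subgroup H) :
    algebraMap (PolyV F k) (RatV F k) '' {r | ∀ h ∈ G,
      matSubV ((ρ h : GL (Fin k) F) : Matrix (Fin k) (Fin k) F) r = r} ⊆
    {a | ∀ h ∈ G, fracActV (ρ h) a = a} := by
  rintro _ ⟨r, hr, rfl⟩ h hh
  rw [fracActV_algebraMap, hr h hh]

lemma le_trdeg_ratV : (k : Cardinal) ≤ Algebra.trdeg F (RatV F k) := by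
  have hpoly : Algebra.trdeg F (PolyV F k) = k := by
    rw [MvPolynomial.trdeg_of_isDomain, Cardinal.mk_fin, Cardinal.lift_natCast]
  rw [← hpoly]
  exact trdeg_le_of_injective (IsScalarTower.toAlgHom F (PolyV F k) (RatV F k))
    (IsFractionRing.injective (PolyV F k) (RatV F k))

end LinearInvariants

/-- **A criterion for an invariant ring to be a localized polynomial ring (second form).**
Let `V` be a faithful `k`-dimensional representation of a finite group `H` over a field `𝔽`
(given by an injective `ρ : H →* GL_k(𝔽)`) and `G ≤ H`.  Suppose `𝔽(V)^G = 𝔽(f_1,…,f_k)`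
with `f_1,…,f_k ∈ 𝔽(V)^G`, and `f` is a homogeneous polynomial in
`𝔽[f_1,…,f_k] ∩ 𝔽[V]^G` with `𝔽[f_1,…,f_k][f⁻¹] ⊆ 𝔽[V]^G[f⁻¹]`.  If moreover
`𝔽[V]^H ⊆ 𝔽[f_1,…,f_k][f⁻¹]`, then `𝔽[V]^G[f⁻¹] = 𝔽[f_1,…,f_k][f⁻¹]`. -/
theorem localized_criterion_full_invariants (F : Type) [Field F] (k : ℕ)
    (H : Type) [Group H] [Finite H]
    (ρ : H →* GL (Fin k) F) (hfaithful : Function.Injective ρ)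
    (G : Subgroup H)
    (f : Fin k → RatV F k)
    (hfG : ∀ i, ∀ h ∈ G, fracActV (ρ h) (f i) = f i)
    (hgen : {a : RatV F k | ∀ h ∈ G, fracActV (ρ h) a = a} =
      ↑(IntermediateField.adjoin F (Set.range f)))
    (p : PolyV F k) (dp : ℕ) (hphom : p.IsHomogeneous dp) (hp0 : p ≠ 0)
    (hpG : ∀ h ∈ G, matSubV ((ρ h : GL (Fin k) F) : Matrix (Fin k) (Fin k) F) p = p)
    (hpadj : algebraMap (PolyV F k) (RatV F k) p ∈ Algebra.adjoin F (Set.range f))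
    (hsub : Algebra.adjoin F
        (Set.range f ∪ {(algebraMap (PolyV F k) (RatV F k) p)⁻¹}) ≤
      Algebra.adjoin F
        ((algebraMap (PolyV F k) (RatV F k) ''
            {r : PolyV F k | ∀ h ∈ G,
              matSubV ((ρ h : GL (Fin k) F) : Matrix (Fin k) (Fin k) F) r = r}) ∪
          {(algebraMap (PolyV F k) (RatV F k) p)⁻¹}))
    (hHsub : (algebraMap (PolyV F k) (RatV F k) ''
        {r : PolyV F k | ∀ h : H,
          matSubV ((ρ h : GL (Fin k) F) : Matrix (Fin k) (Fin k) F) r = r}) ⊆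
      ↑(Algebra.adjoin F (Set.range f ∪ {(algebraMap (PolyV F k) (RatV F k) p)⁻¹}))) :
    Algebra.adjoin F
        ((algebraMap (PolyV F k) (RatV F k) ''
            {r : PolyV F k | ∀ h ∈ G,
              matSubV ((ρ h : GL (Fin k) F) : Matrix (Fin k) (Fin k) F) r = r}) ∪
          {(algebraMap (PolyV F k) (RatV F k) p)⁻¹}) =
      Algebra.adjoin F (Set.range f ∪ {(algebraMap (PolyV F k) (RatV F k) p)⁻¹}) := by
  exact localized_criterion_full_invariants_general (polyVInvariants ρ) _ f
    (by simpa only [Nat.card_fin] using le_trdeg_ratV)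
    ((algebraMap_image_invariants_subset ρ G).trans hgen.subset) _
    ((map_ne_zero_iff _ (IsFractionRing.injective (PolyV F k) (RatV F k))).mpr hp0)
    hpadj hsub hHsub

end
end
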